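/- arXiv:2604.06735 — 2 statements merged into one kernel-verified Lean document; each statement's English description precedes it below -/
import Mathlib

section
/- The number of ascent sequences of length n avoiding both patterns 0101 and 0121 equals the Fibonacci number F_{2n-1}, where F_1 = F_2 = 1 and F_n = F_{n-1} + F_{n-2}. -/
/-- Number of ascents of a sequence (list) of natural numbers. -/
def asc (l : List ℕ) : ℕ :=
  ((List.range (l.length - 1)).filter (fun j => l.getD j 0 < l.getD (j + 1) 0)).length

/-- `x` is an ascent sequence: nonempty, starts with 0, and each later entry is
at most one more than the number of ascents of the preceding prefix. -/
def IsAscSeq (x : List ℕ) : Prop :=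
  x ≠ [] ∧ x.getD 0 0 = 0 ∧
    ∀ i, 1 ≤ i → i < x.length → x.getD i 0 ≤ 1 + asc (x.take i)

/-- `x` contains the pattern `p`: some subsequence of `x` is order-isomorphic
(including equalities) to `p`, i.e. its reduction equals `p`. -/
def Contains (p x : List ℕ) : Prop :=
  ∃ y : List ℕ, y.Sublist x ∧ y.length = p.length ∧
    ∀ i j, i < p.length → j < p.length →
      (y.getD i 0 < y.getD j 0 ↔ p.getD i 0 < p.getD j 0)

/-- `x` avoids the pattern `p`. -/
def Avoids (p x : List ℕ) : Prop := ¬ Contains p x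

theorem aux_asc_snoc (l : List ℕ) (e a : ℕ) :
    asc (l ++ [e] ++ [a]) = asc (l ++ [e]) + if e < a then 1 else 0 := by
  unfold asc
  have h1 : (l ++ [e] ++ [a]).length - 1 = l.length + 1 := by simp
  have h2 : (l ++ [e]).length - 1 = l.length := by simp
  rw [h1, h2, List.range_succ, List.filter_append, List.length_append]
  congr 1
  · congr 1
    apply List.filter_congr
    intro j hj
    rw [List.mem_range] at hj
    rw [List.getD_append _ _ _ j (by simp; omega), List.getD_append _ _ _ (j+1) (by simp; omega)]
  · have h3 : (l ++ [e] ++ [a]).getD l.length 0 = e := by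
      simp [List.getD_eq_getElem?_getD]
    have h4 : (l ++ [e] ++ [a]).getD (l.length + 1) 0 = a := by
      simp [List.getD_eq_getElem?_getD]
    rw [List.filter_singleton, h3, h4]
    by_cases h : e < a <;> simp [h]

theorem aux_isAsc_snoc (l : List ℕ) (a : ℕ) (hl : l ≠ []) :
    IsAscSeq (l ++ [a]) ↔ IsAscSeq l ∧ a ≤ 1 + asc l := by
  have hp : 0 < l.length := List.length_pos_iff.2 hl
  unfold IsAscSeq
  constructor
  · rintro ⟨_, h0, h⟩
    refine ⟨⟨hl, ?_, ?_⟩, ?_⟩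
    · rwa [List.getD_append _ _ _ 0 hp] at h0
    · intro i h1 h2
      have := h i h1 (by simp; omega)
      rwa [List.getD_append _ _ _ i h2, List.take_append_of_le_length h2.le] at this
    · have := h l.length hp (by simp)
      simpa [List.getD_eq_getElem?_getD] using this
  · rintro ⟨⟨_, h0, h⟩, ha⟩
    refine ⟨by simp, ?_, ?_⟩
    · rwa [List.getD_append _ _ _ 0 hp]
    · intro i h1 h2
      by_cases hi : i < l.length
      · rw [List.getD_append _ _ _ i hi, List.take_append_of_le_length hi.le]
        exact h i h1 hi
      · have : i = l.length := by simp at h2; omega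
        subst this
        simpa [List.getD_eq_getElem?_getD] using ha

theorem aux_sub_snoc (p l : List ℕ) (s a : ℕ) :
    (p ++ [s]).Sublist (l ++ [a]) ↔ (p ++ [s]).Sublist l ∨ (s = a ∧ p.Sublist l) := by
  rw [← List.reverse_sublist, ← List.reverse_sublist (l₁ := p ++ [s]) (l₂ := l),
    ← List.reverse_sublist (l₁ := p) (l₂ := l)]
  simp only [List.reverse_append, List.reverse_cons, List.reverse_nil, List.nil_append,
    List.cons_append]
  rw [List.sublist_cons_iff]
  simp

theorem aux_av1 (x : List ℕ) :
    Avoids [0, 1, 0, 1] x ↔ ∀ a b, a < b → ¬ [a, b, a, b].Sublist x := by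
  unfold Avoids Contains
  constructor
  · intro h a b hab hs
    refine h ⟨_, hs, rfl, ?_⟩
    intro i j hi hj
    simp only [List.length_cons, List.length_nil] at hi hj
    interval_cases i <;> interval_cases j <;> simp <;> omega
  · rintro h ⟨y, hs, hy, hc⟩
    match y, hy with
    | [p, q, r, s], _ =>
      have h1 := hc 0 1 (by simp) (by simp)
      have h2 := hc 0 2 (by simp) (by simp)
      have h3 := hc 2 0 (by simp) (by simp)
      have h4 := hc 1 3 (by simp) (by simp)
      have h5 := hc 3 1 (by simp) (by simp)
      simp at h1 h2 h3 h4 h5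
      have e1 : r = p := by omega
      have e2 : s = q := by omega
      subst e1 e2
      exact h _ _ h1 hs

theorem aux_av2 (x : List ℕ) :
    Avoids [0, 1, 2, 1] x ↔ ∀ a b c, a < b → b < c → ¬ [a, b, c, b].Sublist x := by
  unfold Avoids Contains
  constructor
  · intro h a b c hab hbc hs
    refine h ⟨_, hs, rfl, ?_⟩
    intro i j hi hj
    simp only [List.length_cons, List.length_nil] at hi hj
    interval_cases i <;> interval_cases j <;> simp <;> omega
  · rintro h ⟨y, hs, hy, hc⟩
    match y, hy with
    | [p, q, r, s], _ =>
      have h1 := hc 0 1 (by simp) (by simp)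
      have h2 := hc 1 2 (by simp) (by simp)
      have h4 := hc 1 3 (by simp) (by simp)
      have h5 := hc 3 1 (by simp) (by simp)
      simp at h1 h2 h4 h5
      have e2 : s = q := by omega
      subst e2
      exact h _ _ _ h1 h2 hs

def Vd (x : List ℕ) : Prop := IsAscSeq x ∧ Avoids [0, 1, 0, 1] x ∧ Avoids [0, 1, 2, 1] x

theorem aux_vd_snoc (l : List ℕ) (a : ℕ) (hl : l ≠ []) :
    Vd (l ++ [a]) ↔ Vd l ∧ a ≤ 1 + asc l ∧ (∀ w, w < a → ¬ [w, a, w].Sublist l) ∧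
      (∀ w c, w < a → a < c → ¬ [w, a, c].Sublist l) := by
  unfold Vd
  rw [aux_isAsc_snoc l a hl, aux_av1, aux_av1, aux_av2, aux_av2]
  have k : ∀ p q r s : ℕ, [p, q, r, s].Sublist (l ++ [a]) ↔
      [p, q, r, s].Sublist l ∨ (s = a ∧ [p, q, r].Sublist l) :=
    fun p q r s => aux_sub_snoc [p, q, r] l s a
  simp only [k]
  constructor
  · rintro ⟨⟨h1, h2⟩, h3, h4⟩
    exact ⟨⟨h1, fun a b h h' => h3 a b h (Or.inl h'), fun a b c h h' h'' => h4 a b c h h' (Or.inl h'')⟩,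
      h2, fun w h h' => h3 w a h (Or.inr ⟨rfl, h'⟩), fun w c h h' h'' => h4 w a c h h' (Or.inr ⟨rfl, h''⟩)⟩
  · rintro ⟨⟨h1, h3, h4⟩, h2, h5, h6⟩
    refine ⟨⟨h1, h2⟩, ?_, ?_⟩
    · rintro p q h (h' | ⟨rfl, h'⟩)
      · exact h3 _ _ h h'
      · exact h5 _ h h'
    · rintro p q r h g (h' | ⟨rfl, h'⟩)
      · exact h4 _ _ _ h g h'
      · exact h6 _ _ h g h'

/-- Structural invariant; `e` is the last letter. -/
structure AInv (l : List ℕ) (e : ℕ) : Prop where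
  vd : Vd l
  last : ∃ t, l = t ++ [e]
  le : ∀ v ∈ l, v ≤ asc l
  zero : [0].Sublist l
  mid : ∀ a, 0 < a → a < asc l → [0, a, asc l].Sublist l
  top : 0 < asc l → [0, asc l].Sublist l
  lz : e = 0 → 0 < asc l → [0, asc l, 0].Sublist l
  ln : e ≠ 0 → e = asc l

theorem AInv.asc_snoc {l : List ℕ} {e : ℕ} (h : AInv l e) (a : ℕ) :
    asc (l ++ [a]) = asc l + if e < a then 1 else 0 := by
  obtain ⟨t, rfl⟩ := h.last
  exact aux_asc_snoc t e a

theorem AInv.ne {l : List ℕ} {e : ℕ} (h : AInv l e) : l ≠ [] := by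
  obtain ⟨t, rfl⟩ := h.last
  simp

theorem AInv.e_le {l : List ℕ} {e : ℕ} (h : AInv l e) : e ≤ asc l := by
  apply h.le
  obtain ⟨t, ht⟩ := h.last
  simp [ht]

theorem inv_base : AInv [0] 0 := by
  have ha : asc [0] = 0 := by simp [asc]
  refine ⟨⟨⟨by simp, by simp, ?_⟩, ?_, ?_⟩, ⟨[], rfl⟩, ?_, ?_, ?_, ?_, ?_, ?_⟩
  · intro i h1 h2
    simp at h2
    omega
  · rw [aux_av1]
    intro a b _ hs
    simpa using hs.length_le
  · rw [aux_av2]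
    intro a b c _ _ hs
    simpa using hs.length_le
  all_goals simp [ha]

theorem AInv.snoc_zero {l : List ℕ} {e : ℕ} (h : AInv l e) : AInv (l ++ [0]) 0 := by
  have ha : asc (l ++ [0]) = asc l := by simp [h.asc_snoc]
  have hs : l.Sublist (l ++ [0]) := List.sublist_append_left _ _
  refine ⟨?_, ⟨l, rfl⟩, ?_, h.zero.trans hs, ?_, ?_, ?_, ?_⟩
  · rw [aux_vd_snoc _ _ h.ne]
    exact ⟨h.vd, by omega, by simp, by simp⟩
  · intro v hv
    rw [ha]
    rcases List.mem_append.1 hv with hv | hv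
    · exact h.le v hv
    · simp at hv; omega
  · rw [ha]; exact fun a h1 h2 => (h.mid a h1 h2).trans hs
  · rw [ha]; exact fun h1 => (h.top h1).trans hs
  · rw [ha]; exact fun _ h1 => (h.top h1).append (List.Sublist.refl [0])
  · simp

theorem AInv.snoc_new {l : List ℕ} {e : ℕ} (h : AInv l e) : AInv (l ++ [asc l + 1]) (asc l + 1) := by
  have ha : asc (l ++ [asc l + 1]) = asc l + 1 := by
    rw [h.asc_snoc, if_pos]
    have := h.e_le
    omega
  have hs : l.Sublist (l ++ [asc l + 1]) := List.sublist_append_left _ _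
  have hn : ∀ w q, ¬ [w, asc l + 1, q].Sublist l := by
    intro w q hh
    have := h.le (asc l + 1) (hh.subset (by simp))
    omega
  refine ⟨?_, ⟨l, rfl⟩, ?_, h.zero.trans hs, ?_, ?_, ?_, ?_⟩
  · rw [aux_vd_snoc _ _ h.ne]
    exact ⟨h.vd, by omega, fun w _ => hn _ _, fun w c _ _ => hn _ _⟩
  · intro v hv
    rw [ha]
    rcases List.mem_append.1 hv with hv | hv
    · exact (h.le v hv).trans (by omega)
    · simp at hv; omega
  · rw [ha]
    intro a h1 h2
    have : [0, a].Sublist l := by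
      rcases Nat.lt_succ_iff_lt_or_eq.1 h2 with h3 | rfl
      · exact List.Sublist.trans (by simp) (h.mid a h1 h3)
      · exact h.top h1
    exact this.append (List.Sublist.refl [asc l + 1])
  · rw [ha]; exact fun _ => h.zero.append (List.Sublist.refl [asc l + 1])
  · omega
  · simp [ha]

theorem AInv.snoc_same {l : List ℕ} {e : ℕ} (h : AInv l e) (he : e ≠ 0) :
    AInv (l ++ [asc l]) (asc l) := by
  have hel := h.ln he
  have ha : asc (l ++ [asc l]) = asc l := by
    rw [h.asc_snoc, if_neg]; rfl
    omega
  have hs : l.Sublist (l ++ [asc l]) := List.sublist_append_left _ _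
  refine ⟨?_, ⟨l, rfl⟩, ?_, h.zero.trans hs, ?_, ?_, ?_, ?_⟩
  · rw [aux_vd_snoc _ _ h.ne]
    refine ⟨h.vd, by omega, ?_, ?_⟩
    · intro w hw hh
      obtain ⟨t, ht⟩ := h.last
      have h2 := (aux_av1 l).1 h.vd.2.1 w (asc l) hw
      rw [← hel] at hh h2 hw
      rw [ht] at hh h2
      rcases (aux_sub_snoc [w, e] t w e).1 hh with h3 | h3
      · exact h2 (h3.append (List.Sublist.refl [e]))
      · omega
    · intro w c _ hc hh
      have := h.le c (hh.subset (by simp))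
      omega
  · intro v hv
    rw [ha]
    rcases List.mem_append.1 hv with hv | hv
    · exact h.le v hv
    · simp at hv; omega
  · rw [ha]; exact fun a h1 h2 => (h.mid a h1 h2).trans hs
  · rw [ha]; exact fun h1 => (h.top h1).trans hs
  · omega
  · simp [ha]

theorem AInv.cases {l : List ℕ} {e : ℕ} (h : AInv l e) {a : ℕ} (hv : Vd (l ++ [a])) :
    a = 0 ∨ a = asc l + 1 ∨ (e ≠ 0 ∧ a = asc l) := by
  rw [aux_vd_snoc _ _ h.ne] at hv
  obtain ⟨_, h1, h2, h3⟩ := hv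
  by_contra hc
  push Not at hc
  obtain ⟨c1, c2, c3⟩ := hc
  by_cases hlt : a < asc l
  · exact h3 0 _ (by omega) hlt (h.mid a (by omega) hlt)
  · have : a = asc l := by omega
    by_cases he : e = 0
    · subst this
      exact h2 0 (by omega) (h.lz he (by omega))
    · exact c3 he this

def ZN : ℕ → Finset (List ℕ) × Finset (List ℕ)
  | 0 => ({[0]}, ∅)
  | n + 1 => (((ZN n).1 ∪ (ZN n).2).image (fun l => l ++ [0]),
      ((ZN n).1 ∪ (ZN n).2).image (fun l => l ++ [asc l + 1]) ∪
        (ZN n).2.image (fun l => l ++ [asc l]))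

theorem ZN_inv (n : ℕ) : (∀ l ∈ (ZN n).1, l.length = n + 1 ∧ AInv l 0) ∧
    (∀ l ∈ (ZN n).2, l.length = n + 1 ∧ ∃ e, e ≠ 0 ∧ AInv l e) := by
  induction n with
  | zero => simp [ZN, inv_base]
  | succ n ih =>
    obtain ⟨i1, i2⟩ := ih
    have i3 : ∀ l ∈ (ZN n).1 ∪ (ZN n).2, l.length = n + 1 ∧ ∃ e, AInv l e := by
      intro l hl
      rcases Finset.mem_union.1 hl with hl | hl
      · exact ⟨(i1 l hl).1, 0, (i1 l hl).2⟩
      · obtain ⟨h, e, _, h'⟩ := i2 l hl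
        exact ⟨h, e, h'⟩
    constructor
    · intro l hl
      obtain ⟨t, ht, rfl⟩ := Finset.mem_image.1 hl
      obtain ⟨h, e, h'⟩ := i3 t ht
      exact ⟨by simp [h], h'.snoc_zero⟩
    · intro l hl
      rcases Finset.mem_union.1 hl with hl | hl
      · obtain ⟨t, ht, rfl⟩ := Finset.mem_image.1 hl
        obtain ⟨h, e, h'⟩ := i3 t ht
        exact ⟨by simp [h], _, by omega, h'.snoc_new⟩
      · obtain ⟨t, ht, rfl⟩ := Finset.mem_image.1 hl
        obtain ⟨h, e, he, h'⟩ := i2 t ht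
        have := h'.ln he
        exact ⟨by simp [h], _, by omega, h'.snoc_same he⟩

theorem ZN_complete (n : ℕ) : ∀ l : List ℕ, l.length = n + 1 → Vd l →
    l ∈ (ZN n).1 ∪ (ZN n).2 := by
  induction n with
  | zero =>
    intro l hl hv
    obtain ⟨a, rfl⟩ := List.length_eq_one_iff.1 hl
    have := hv.1.2.1
    simp at this
    simp [ZN, this]
  | succ n ih =>
    intro l hl hv
    rcases List.eq_nil_or_concat l with rfl | ⟨t, a, rfl⟩
    · simp at hl
    rw [List.concat_eq_append] at hl hv ⊢
    have hl' : t.length = n + 1 := by simpa using hl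
    have hne : t ≠ [] := by rintro rfl; simp at hl'
    have hvt : Vd t := ((aux_vd_snoc t a hne).1 hv).1
    have hm := ih t hl' hvt
    rcases Finset.mem_union.1 hm with h | h
    · have hi := ((ZN_inv n).1 t h).2
      rcases hi.cases hv with rfl | rfl | ⟨h0, _⟩
      · exact Finset.mem_union_left _ (Finset.mem_image.2 ⟨t, hm, rfl⟩)
      · exact Finset.mem_union_right _ (Finset.mem_union_left _ (Finset.mem_image.2 ⟨t, hm, rfl⟩))
      · exact absurd rfl h0
    · obtain ⟨_, e, he, hi⟩ := (ZN_inv n).2 t h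
      rcases hi.cases hv with rfl | rfl | ⟨h0, rfl⟩
      · exact Finset.mem_union_left _ (Finset.mem_image.2 ⟨t, hm, rfl⟩)
      · exact Finset.mem_union_right _ (Finset.mem_union_left _ (Finset.mem_image.2 ⟨t, hm, rfl⟩))
      · exact Finset.mem_union_right _ (Finset.mem_union_right _ (Finset.mem_image.2 ⟨t, h, rfl⟩))

theorem ZN_disj (n : ℕ) : Disjoint (ZN n).1 (ZN n).2 := by
  rw [Finset.disjoint_left]
  intro l h1 h2
  obtain ⟨t, ht⟩ := ((ZN_inv n).1 l h1).2.last
  obtain ⟨_, e, he, hi⟩ := (ZN_inv n).2 l h2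
  obtain ⟨t', ht'⟩ := hi.last
  rw [ht] at ht'
  have := (List.append_inj' ht' rfl).2
  simp at this
  omega

theorem snoc_inj (f : List ℕ → ℕ) : Function.Injective (fun l : List ℕ => l ++ [f l]) := by
  intro a b h
  exact (List.append_inj' h rfl).1

theorem ZN_card (n : ℕ) : (ZN n).2.card = Nat.fib (2 * n) ∧
    (ZN n).1.card + (ZN n).2.card = Nat.fib (2 * n + 1) := by
  induction n with
  | zero => simp [ZN]
  | succ n ih =>
    obtain ⟨h1, h2⟩ := ih
    have hu := Finset.card_union_of_disjoint (ZN_disj n)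
    have c1 : (ZN (n+1)).1.card = (ZN n).1.card + (ZN n).2.card := by
      rw [← hu]
      exact Finset.card_image_of_injective _ (snoc_inj fun _ => 0)
    have c2 : (ZN (n+1)).2.card = (ZN n).1.card + (ZN n).2.card + (ZN n).2.card := by
      rw [← hu]
      show (Finset.card (_ ∪ _)) = _
      rw [Finset.card_union_of_disjoint,
        Finset.card_image_of_injective _ (snoc_inj fun l => asc l + 1),
        Finset.card_image_of_injective _ (snoc_inj asc)]
      rw [Finset.disjoint_left]
      intro l a1 a2
      obtain ⟨t, _, rfl⟩ := Finset.mem_image.1 a1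
      obtain ⟨t', _, h⟩ := Finset.mem_image.1 a2
      have := List.append_inj' h rfl
      obtain ⟨rfl, h⟩ := this
      simp at h
    have f1 : Nat.fib (2 * (n + 1)) = Nat.fib (2 * n) + Nat.fib (2 * n + 1) := Nat.fib_add_two
    have f2 : Nat.fib (2 * (n + 1) + 1) = Nat.fib (2 * n + 1) + Nat.fib (2 * (n + 1)) :=
      Nat.fib_add_two
    omega

theorem stmt_1 (n : ℕ) (hn : 1 ≤ n) :
    Nat.card {x : List ℕ // x.length = n ∧ IsAscSeq x ∧ Avoids [0, 1, 0, 1] x ∧ Avoids [0, 1, 2, 1] x} = Nat.fib (2 * n - 1) := by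
  obtain ⟨m, rfl⟩ : ∃ m, n = m + 1 := ⟨n - 1, by omega⟩
  have key : ∀ x : List ℕ, (x.length = m + 1 ∧ IsAscSeq x ∧ Avoids [0, 1, 0, 1] x ∧
      Avoids [0, 1, 2, 1] x) ↔ x ∈ (ZN m).1 ∪ (ZN m).2 := by
    intro x
    constructor
    · rintro ⟨h, hv⟩
      exact ZN_complete m x h hv
    · intro h
      rcases Finset.mem_union.1 h with h | h
      · have := (ZN_inv m).1 x h
        exact ⟨this.1, this.2.vd⟩
      · obtain ⟨h1, e, _, h2⟩ := (ZN_inv m).2 x h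
        exact ⟨h1, h2.vd⟩
  rw [Nat.card_congr (Equiv.subtypeEquivRight key), Nat.card_eq_fintype_card, Fintype.card_coe,
    Finset.card_union_of_disjoint (ZN_disj m), (ZN_card m).2]
  congr 1
end

section
/- For n >= 1, the number of ascent sequences of length n avoiding the three patterns 0112, 0120, and 0121 equals 2^{n-1} + C(n, 3). -/
def ascf (f : ℕ → ℕ) : ℕ → ℕ
  | 0 => 0
  | i + 1 => ascf f i + if f i < f (i + 1) then 1 else 0

theorem asc_take (x : List ℕ) (i : ℕ) (hi : i < x.length) :
    asc (x.take (i + 1)) = ascf (fun j => x.getD j 0) i := by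
  have key : ∀ m, ((List.range m).filter
      (fun j => decide (x.getD j 0 < x.getD (j + 1) 0))).length
      = ascf (fun j => x.getD j 0) m := by
    intro m
    induction m with
    | zero => simp [ascf]
    | succ m ih =>
      rw [List.range_succ, List.filter_append, List.length_append, ih, ascf]
      congr 1
      by_cases h : x.getD m 0 < x.getD (m + 1) 0
      · simp only [List.filter_cons, h]; simp
      · simp only [List.filter_cons, h]; simp
  rw [← key, asc]
  have h1 : (x.take (i + 1)).length - 1 = i := by
    rw [List.length_take]; omega
  rw [h1]
  congr 1
  apply List.filter_congr
  intro j hj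
  have hj := List.mem_range.1 hj
  have e : ∀ k, k < i + 1 → (x.take (i + 1)).getD k 0 = x.getD k 0 := by
    intro k hk
    simp [List.getD_eq_getElem?_getD, List.getElem?_take, hk]
  rw [e j (by omega), e (j + 1) (by omega)]

theorem contains_iff (a b c d : ℕ) (x : List ℕ) :
    Contains [a, b, c, d] x ↔ ∃ i j k l, i < j ∧ j < k ∧ k < l ∧ l < x.length ∧
      ∀ u v, u < 4 → v < 4 →
      ([x.getD i 0, x.getD j 0, x.getD k 0, x.getD l 0].getD u 0 <
        [x.getD i 0, x.getD j 0, x.getD k 0, x.getD l 0].getD v 0 ↔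
        [a, b, c, d].getD u 0 < [a, b, c, d].getD v 0) := by
  constructor
  · rintro ⟨y, hs, hl, h⟩
    match y, hl with
    | [p, q, r, s], _ =>
      obtain ⟨f, hf⟩ := List.sublist_iff_exists_fin_orderEmbedding_get_eq.1 hs
      refine ⟨f ⟨0, by simp⟩, f ⟨1, by simp⟩, f ⟨2, by simp⟩, f ⟨3, by simp⟩, ?_, ?_, ?_, ?_, ?_⟩
      · exact f.strictMono (by simp)
      · exact f.strictMono (by simp)
      · exact f.strictMono (by simp)
      · exact (f _).2
      · have h0 := hf ⟨0, by simp⟩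
        have h1 := hf ⟨1, by simp⟩
        have h2 := hf ⟨2, by simp⟩
        have h3 := hf ⟨3, by simp⟩
        have e : ∀ t : Fin x.length, x.getD t 0 = x.get t := by
          intro t; simp
        rw [e, e, e, e, ← h0, ← h1, ← h2, ← h3]
        exact h
  · rintro ⟨i, j, k, l, hij, hjk, hkl, hl, h⟩
    refine ⟨[x.getD i 0, x.getD j 0, x.getD k 0, x.getD l 0], ?_, rfl, h⟩
    have e : [x.getD i 0, x.getD j 0, x.getD k 0, x.getD l 0] =
      [(⟨i, by omega⟩ : Fin x.length), ⟨j, by omega⟩, ⟨k, by omega⟩, ⟨l, hl⟩].map x.get := by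
      have e : ∀ t (ht : t < x.length), x.getD t 0 = x.get ⟨t, ht⟩ := by
        intro t ht; simp [ht]
      simp only [List.map]
      rw [e i, e j, e k, e l]
    rw [e]
    apply List.map_getElem_sublist
    simp
    omega

def Good (f : ℕ → ℕ) (n : ℕ) : Prop :=
  f 0 = 0 ∧ (∀ i, i + 1 < n → f (i + 1) ≤ 1 + ascf f i) ∧
  (∀ i j k l, i < j → j < k → k < l → l < n →
    ¬ (f i < f j ∧ f j = f k ∧ f k < f l) ∧
    ¬ (f i < f j ∧ f j < f k ∧ f l = f i) ∧
    ¬ (f i < f j ∧ f j < f k ∧ f l = f j))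

theorem pat (a b c d p q r s : ℕ) : (∀ u v, u < 4 → v < 4 →
      ([p, q, r, s].getD u 0 < [p, q, r, s].getD v 0 ↔
        [a, b, c, d].getD u 0 < [a, b, c, d].getD v 0)) ↔
    ((p < q ↔ a < b) ∧ (p < r ↔ a < c) ∧ (p < s ↔ a < d) ∧
     (q < p ↔ b < a) ∧ (q < r ↔ b < c) ∧ (q < s ↔ b < d) ∧
     (r < p ↔ c < a) ∧ (r < q ↔ c < b) ∧ (r < s ↔ c < d) ∧
     (s < p ↔ d < a) ∧ (s < q ↔ d < b) ∧ (s < r ↔ d < c)) := by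
  constructor
  · intro h
    exact ⟨h 0 1 (by simp) (by simp), h 0 2 (by simp) (by simp), h 0 3 (by simp) (by simp),
      h 1 0 (by simp) (by simp), h 1 2 (by simp) (by simp), h 1 3 (by simp) (by simp),
      h 2 0 (by simp) (by simp), h 2 1 (by simp) (by simp), h 2 3 (by simp) (by simp),
      h 3 0 (by simp) (by simp), h 3 1 (by simp) (by simp), h 3 2 (by simp) (by simp)⟩
  · intro h u v hu hv
    obtain ⟨h1, h2, h3, h4, h5, h6, h7, h8, h9, h10, h11, h12⟩ := h
    interval_cases u <;> interval_cases v <;> first | assumption | simp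

theorem good_iff (x : List ℕ) (n : ℕ) (hn : 1 ≤ n) (hx : x.length = n) :
    (IsAscSeq x ∧ Avoids [0, 1, 1, 2] x ∧ Avoids [0, 1, 2, 0] x ∧ Avoids [0, 1, 2, 1] x) ↔
    Good (fun i => x.getD i 0) n := by
  have hA : IsAscSeq x ↔ (x.getD 0 0 = 0 ∧
      (∀ i, i + 1 < n → x.getD (i + 1) 0 ≤ 1 + ascf (fun i => x.getD i 0) i)) := by
    unfold IsAscSeq
    constructor
    · rintro ⟨_, h0, h⟩
      refine ⟨h0, fun i hi => ?_⟩
      rw [← asc_take x i (by omega)]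
      exact h (i + 1) (by omega) (by omega)
    · rintro ⟨h0, h⟩
      refine ⟨?_, h0, ?_⟩
      · rintro rfl; simp at hx; omega
      · intro i h1 h2
        obtain ⟨i, rfl⟩ : ∃ k, i = k + 1 := ⟨i - 1, by omega⟩
        rw [asc_take x i (by omega)]
        exact h i (by omega)
  unfold Good Avoids
  rw [hA, contains_iff, contains_iff, contains_iff]
  simp only [pat, hx]
  constructor
  · rintro ⟨⟨h0, h1⟩, h2, h3, h4⟩
    refine ⟨h0, h1, fun i j k l hij hjk hkl hl => ⟨fun h => h2 ⟨i, j, k, l, hij, hjk, hkl, hl, ?_⟩,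
      fun h => h3 ⟨i, j, k, l, hij, hjk, hkl, hl, ?_⟩,
      fun h => h4 ⟨i, j, k, l, hij, hjk, hkl, hl, ?_⟩⟩⟩ <;> omega
  · rintro ⟨h0, h1, h2⟩
    refine ⟨⟨h0, h1⟩, ?_, ?_, ?_⟩
    · rintro ⟨i, j, k, l, hij, hjk, hkl, hl, h⟩
      apply (h2 i j k l hij hjk hkl hl).1; omega
    · rintro ⟨i, j, k, l, hij, hjk, hkl, hl, h⟩
      apply (h2 i j k l hij hjk hkl hl).2.1; omega
    · rintro ⟨i, j, k, l, hij, hjk, hkl, hl, h⟩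
      apply (h2 i j k l hij hjk hkl hl).2.2; omega

def gg (p q r i : ℕ) : ℕ :=
  if i < p then 0 else if i = p then 1 else if i < q then 0 else min i r - q + 2

theorem ascf_congr (f g : ℕ → ℕ) (i : ℕ) (h : ∀ j, j ≤ i → f j = g j) :
    ascf f i = ascf g i := by
  induction i with
  | zero => rfl
  | succ i ih =>
    rw [ascf, ascf, ih (fun j hj => h j (by omega)), h i (by omega), h (i + 1) le_rfl]

theorem ascf_gg (p q r i : ℕ) (hp : 1 ≤ p) (hpq : p < q) (hqr : q ≤ r) :
    ascf (gg p q r) i = if i < p then 0 else if i < q then 1 else min i r - q + 2 := by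
  induction i with
  | zero => simp [ascf]; omega
  | succ i ih =>
    rw [ascf, ih]
    unfold gg
    split_ifs <;> omega

theorem ascf_le_one (f : ℕ → ℕ) (p n : ℕ) (h : ∀ i, i < n → f i = if i = p then 1 else 0)
    (i : ℕ) (hi : i < n) : ascf f i ≤ if i < p then 0 else 1 := by
  induction i with
  | zero => simp [ascf]
  | succ i ih =>
    have ih := ih (by omega)
    rw [ascf, h i (by omega), h (i + 1) hi]
    split_ifs at * <;> omega

theorem good_bin (f : ℕ → ℕ) (n : ℕ) (h0 : f 0 = 0) (h : ∀ i, i < n → f i ≤ 1) : Good f n := by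
  refine ⟨h0, fun i hi => ?_, fun i j k l hij hjk hkl hl => ?_⟩
  · have := h _ hi; omega
  · have := h i (by omega)
    have := h j (by omega)
    have := h k (by omega)
    have := h l (by omega)
    omega

theorem gg_spec (p q r i : ℕ) (hpq : p < q) :
    (gg p q r i = 0 ∧ i < q ∧ i ≠ p) ∨ (i = p ∧ gg p q r i = 1) ∨
    (q ≤ i ∧ gg p q r i = min i r - q + 2) := by
  unfold gg; split_ifs <;> omega

theorem good_gg (f : ℕ → ℕ) (n p q r : ℕ) (hp : 1 ≤ p) (hpq : p < q) (hqr : q ≤ r)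
    (hr : r < n) (h : ∀ i, i < n → f i = gg p q r i) : Good f n := by
  refine ⟨?_, fun i hi => ?_, fun i j k l hij hjk hkl hl => ?_⟩
  · rw [h 0 (by omega)]; unfold gg; rw [if_pos (by omega)]
  · rw [ascf_congr f (gg p q r) i (fun j hj => h j (by omega)), ascf_gg p q r i hp hpq hqr, h _ hi]
    unfold gg
    split_ifs <;> omega
  · rw [h i (by omega), h j (by omega), h k (by omega), h l (by omega)]
    have sp := gg_spec p q r
    have si := sp i hpq
    have sj := sp j hpq
    have sk := sp k hpq
    have sl := sp l hpq
    clear sp h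
    generalize gg p q r i = a at *
    generalize gg p q r j = b at *
    generalize gg p q r k = c at *
    generalize gg p q r l = d at *
    refine ⟨?_, ?_, ?_⟩ <;> rintro ⟨h1, h2, h3⟩ <;>
    rcases sj with sj | sj | sj <;> try omega

theorem good_char (f : ℕ → ℕ) (n : ℕ) (hn : 1 ≤ n) (h : Good f n) :
    (∀ i, i < n → f i ≤ 1) ∨ ∃ p q r, 1 ≤ p ∧ p < q ∧ q ≤ r ∧ r < n ∧
      ∀ i, i < n → f i = gg p q r i := by
  induction n, hn using Nat.le_induction with
  | base =>
    left
    intro i hi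
    have : i = 0 := by omega
    subst this
    rw [h.1]; omega
  | succ n hn ih =>
    obtain ⟨h0, h1, h2⟩ := h
    have hg : Good f n := ⟨h0, fun i hi => h1 i (by omega),
      fun i j k l hij hjk hkl hl => h2 i j k l hij hjk hkl (by omega)⟩
    have hb := h1 (n - 1) (by omega)
    rw [Nat.sub_add_cancel hn] at hb
    rcases ih hg with hB | ⟨p, q, r, hp, hpq, hqr, hr, hf⟩
    · by_cases hfn : f n ≤ 1
      · left
        intro i hi
        rcases Nat.lt_succ_iff_lt_or_eq.1 hi with h | rfl
        · exact hB i h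
        · exact hfn
      · right
        have hex : ∃ p, p < n ∧ f p = 1 := by
          by_contra hne
          push Not at hne
          have := ascf_le_one f n n (fun i hi => by
            have := hB i hi; have := hne i hi; rw [if_neg (by omega)]; omega) (n - 1) (by omega)
          rw [if_pos (by omega)] at this
          omega
        obtain ⟨p, hpn, hp1⟩ := hex
        have hp0 : p ≠ 0 := by rintro rfl; omega
        have huniq : ∀ i, i < n → f i = if i = p then 1 else 0 := by
          intro i hi
          split_ifs with hip
          · rw [hip, hp1]
          · have hi1 := hB i hi
            by_contra hne
            have hi0 : i ≠ 0 := by rintro rfl; omega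
            rcases lt_or_gt_of_ne hip with h | h
            · exact (h2 0 i p n (by omega) h hpn (by omega)).1 (by omega)
            · exact (h2 0 p i n (by omega) h hi (by omega)).1 (by omega)
        have := ascf_le_one f p n huniq (n - 1) (by omega)
        rw [if_neg (by omega)] at this
        refine ⟨p, n, n, by omega, hpn, le_rfl, by omega, fun i hi => ?_⟩
        rcases Nat.lt_succ_iff_lt_or_eq.1 hi with h | rfl
        · rw [huniq i h]; unfold gg; split_ifs <;> omega
        · unfold gg; split_ifs <;> omega
    · right
      rw [ascf_congr f (gg p q r) (n - 1) (fun j hj => hf j (by omega)),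
        ascf_gg p q r _ hp hpq hqr, if_neg (by omega), if_neg (by omega)] at hb
      have hfp : f p = 1 := by rw [hf p (by omega)]; unfold gg; split_ifs <;> omega
      have hfm : ∀ i, q ≤ i → i < n → f i = min i r - q + 2 := by
        intro i hi hin
        rw [hf i hin]; unfold gg; split_ifs <;> omega
      have hfr := hfm r hqr hr
      have hfq := hfm q le_rfl (by omega)
      have n0 : f n ≠ 0 := fun h => (h2 0 p q n (by omega) hpq (by omega) (by omega)).2.1 (by omega)
      have n1 : f n ≠ 1 := fun h => (h2 0 p q n (by omega) hpq (by omega) (by omega)).2.2 (by omega)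
      have n2 : r - q + 2 ≤ f n := by
        by_contra hlt
        have hv := hfm (f n - 2 + q) (by omega) (by omega)
        exact (h2 0 (f n - 2 + q) r n (by omega) (by omega) (by omega) (by omega)).2.2 (by omega)
      by_cases he : f n = r - q + 2
      · refine ⟨p, q, r, hp, hpq, hqr, by omega, fun i hi => ?_⟩
        rcases Nat.lt_succ_iff_lt_or_eq.1 hi with h | rfl
        · exact hf i h
        · unfold gg; split_ifs <;> omega
      · have hrn : r = n - 1 := by
          by_contra hne
          have := hfm (n - 1) (by omega) (by omega)
          exact (h2 0 r (n - 1) n (by omega) (by omega) (by omega) (by omega)).1 (by omega)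
        refine ⟨p, q, n, hp, hpq, by omega, by omega, fun i hi => ?_⟩
        rcases Nat.lt_succ_iff_lt_or_eq.1 hi with h | rfl
        · rw [hf i h]; unfold gg; split_ifs <;> omega
        · unfold gg; split_ifs <;> omega

def mk (n : ℕ) (f : ℕ → ℕ) : List ℕ := (List.range n).map f

theorem mk_length (n : ℕ) (f : ℕ → ℕ) : (mk n f).length = n := by simp [mk]

theorem mk_getD (n : ℕ) (f : ℕ → ℕ) (i : ℕ) (hi : i < n) : (mk n f).getD i 0 = f i := by
  simp [mk, hi]

theorem eq_mk (n : ℕ) (f : ℕ → ℕ) (x : List ℕ) (hx : x.length = n)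
    (h : ∀ i, i < n → x.getD i 0 = f i) : x = mk n f := by
  apply List.ext_getElem
  · rw [hx, mk_length]
  · intro i h1 h2
    have := h i (by omega)
    simp [h1] at this
    simp [mk, this]

def binf (s : Finset ℕ) (i : ℕ) : ℕ := if 1 ≤ i ∧ i - 1 ∈ s then 1 else 0

def binS (n : ℕ) : Finset (List ℕ) :=
  (Finset.range (n - 1)).powerset.image (fun s => mk n (binf s))

def triS (n : ℕ) : Finset (Σ _ : ℕ, Σ _ : ℕ, ℕ) :=
  (Finset.range n).sigma fun r => (Finset.range r).sigma fun q => Finset.range q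

def ggS (n : ℕ) : Finset (List ℕ) :=
  (triS n).image (fun t => mk n (gg (t.2.2 + 1) (t.2.1 + 1) t.1))

theorem card_binS (n : ℕ) : (binS n).card = 2 ^ (n - 1) := by
  rw [binS, Finset.card_image_of_injOn, Finset.card_powerset, Finset.card_range]
  intro s hs t ht hst
  simp only [Finset.coe_powerset, Set.mem_preimage, Set.mem_powerset_iff, Finset.coe_subset] at hs ht
  have hst : mk n (binf s) = mk n (binf t) := hst
  ext i
  have key : i < n - 1 → (i ∈ s ↔ i ∈ t) := by
    intro hi
    have h1 := mk_getD n (binf s) (i + 1) (by omega)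
    have h2 := mk_getD n (binf t) (i + 1) (by omega)
    rw [hst, h2] at h1
    unfold binf at h1
    simp at h1
    split_ifs at h1 <;> simp_all
  constructor
  · intro h; exact (key (Finset.mem_range.1 (hs h))).1 h
  · intro h; exact (key (Finset.mem_range.1 (ht h))).2 h

theorem card_triS (n : ℕ) : (triS n).card = n.choose 3 := by
  rw [triS, Finset.card_sigma]
  have h2 : ∀ r : ℕ, ((Finset.range r).sigma fun q => Finset.range q).card = r.choose 2 := by
    intro r
    rw [Finset.card_sigma]
    induction r with
    | zero => rfl
    | succ r ih => rw [Finset.sum_range_succ, ih, Nat.choose_succ_succ' r 1]; simp; omega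
  simp only [h2]
  induction n with
  | zero => rfl
  | succ r ih => rw [Finset.sum_range_succ, ih, Nat.choose_succ_succ' r 2, Nat.add_comm]

theorem gg_inj (n p q r p' q' r' : ℕ) (hp : 1 ≤ p) (hpq : p < q) (hqr : q ≤ r) (hr : r < n)
    (hp' : 1 ≤ p') (hpq' : p' < q') (hqr' : q' ≤ r') (hr' : r' < n)
    (h : ∀ i, i < n → gg p q r i = gg p' q' r' i) : p = p' ∧ q = q' ∧ r = r' := by
  have h1 := h p (by omega)
  have h2 := h p' (by omega)
  have e1 : p = p' := by
    unfold gg at h1 h2; split_ifs at h1 h2 <;> omega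
  subst e1
  have h1 := h q (by omega)
  have h2 := h q' (by omega)
  have e1 : q = q' := by
    unfold gg at h1 h2; split_ifs at h1 h2 <;> omega
  subst e1
  have h1 := h r (by omega)
  have h2 := h r' (by omega)
  unfold gg at h1 h2; split_ifs at h1 h2 <;> omega

theorem card_ggS (n : ℕ) : (ggS n).card = n.choose 3 := by
  rw [ggS, Finset.card_image_of_injOn, card_triS]
  rintro ⟨r, q, p⟩ h ⟨r', q', p'⟩ h' e
  simp [triS] at h h'
  have e : mk n (gg (p + 1) (q + 1) r) = mk n (gg (p' + 1) (q' + 1) r') := e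
  have := gg_inj n (p + 1) (q + 1) r (p' + 1) (q' + 1) r' (by omega) (by omega) (by omega)
    (by omega) (by omega) (by omega) (by omega) (by omega) (fun i hi => by
      rw [← mk_getD n (gg (p + 1) (q + 1) r) i hi, e, mk_getD n _ i hi])
  obtain ⟨h1, h2, h3⟩ := this
  have h1 : p = p' := by omega
  have h2 : q = q' := by omega
  subst h1 h2 h3
  rfl

theorem disj (n : ℕ) : Disjoint (binS n) (ggS n) := by
  rw [Finset.disjoint_left]
  intro x h1 h2
  simp only [binS, ggS, Finset.mem_image] at h1 h2
  obtain ⟨s, _, rfl⟩ := h1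
  obtain ⟨⟨r, q, p⟩, h, e⟩ := h2
  simp [triS] at h
  have e1 := mk_getD n (binf s) r (by omega)
  rw [← e, mk_getD n _ r (by omega)] at e1
  unfold gg binf at e1
  simp only at e1
  split_ifs at e1 <;> omega

theorem mem_iff (n : ℕ) (hn : 1 ≤ n) (x : List ℕ) :
    (x.length = n ∧ IsAscSeq x ∧ Avoids [0, 1, 1, 2] x ∧ Avoids [0, 1, 2, 0] x ∧
      Avoids [0, 1, 2, 1] x) ↔ x ∈ binS n ∪ ggS n := by
  constructor
  · rintro ⟨hx, h⟩
    rw [good_iff x n hn hx] at h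
    rw [Finset.mem_union]
    rcases good_char _ n hn h with hB | ⟨p, q, r, hp, hpq, hqr, hr, hf⟩
    · left
      refine Finset.mem_image.2 ⟨(Finset.range (n - 1)).filter (fun i => x.getD (i + 1) 0 = 1),
        by simp, ?_⟩
      symm
      apply eq_mk n _ x hx
      intro i hi
      unfold binf
      have hb : x.getD i 0 ≤ 1 := hB i hi
      have h0 : x.getD 0 0 = 0 := h.1
      rcases Nat.eq_zero_or_pos i with rfl | hpos
      · rw [h0]; simp
      · obtain ⟨i, rfl⟩ : ∃ k, i = k + 1 := ⟨i - 1, by omega⟩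
        simp only [Finset.mem_filter, Finset.mem_range, Nat.add_sub_cancel]
        split_ifs <;> omega
    · right
      refine Finset.mem_image.2 ⟨⟨r, q - 1, p - 1⟩, ?_, ?_⟩
      · simp [triS]; omega
      · symm
        apply eq_mk n _ x hx
        intro i hi
        have : x.getD i 0 = gg p q r i := hf i hi
        rw [this]
        simp only
        rw [Nat.sub_add_cancel hp, Nat.sub_add_cancel (by omega)]
  · intro h
    rw [Finset.mem_union, binS, ggS, Finset.mem_image, Finset.mem_image] at h
    rcases h with ⟨s, _, rfl⟩ | ⟨⟨r, q, p⟩, h, rfl⟩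
    · refine ⟨mk_length _ _, ?_⟩
      rw [good_iff _ n hn (mk_length _ _)]
      apply good_bin
      · rw [mk_getD n _ 0 hn]; simp [binf]
      · intro i hi
        rw [mk_getD n _ i hi]; unfold binf; split_ifs <;> omega
    · refine ⟨mk_length _ _, ?_⟩
      rw [good_iff _ n hn (mk_length _ _)]
      simp [triS] at h
      exact good_gg _ n (p + 1) (q + 1) r (by omega) (by omega) (by omega) (by omega)
        (fun i hi => mk_getD n _ i hi)

theorem stmt_11 (n : ℕ) (hn : 1 ≤ n) :
    Nat.card {x : List ℕ // x.length = n ∧ IsAscSeq x ∧ Avoids [0, 1, 1, 2] x ∧ Avoids [0, 1, 2, 0] x ∧ Avoids [0, 1, 2, 1] x} = 2 ^ (n - 1) + Nat.choose n 3 := by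
  rw [Nat.card_congr (Equiv.subtypeEquivRight (mem_iff n hn))]
  rw [Nat.card_eq_fintype_card, Fintype.card_coe, Finset.card_union_of_disjoint (disj n),
    card_binS, card_ggS]
end
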